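/- arXiv:1503.01588 — 2 statements merged into one kernel-verified Lean document; each statement's English description precedes it below -/
import Mathlib

section
/- Let ε ∈ ℝ with 0 < ε < 1, let M : ℕ → Type be a family of nonempty finite message spaces, let Π : ∀ n, (Fin n → M n) → Bool be a family of one-round protocols, and let t : ℕ → ℕ. If for every n ≥ 1 the protocol Π n is ε-secure against t n strong adaptive corruptions, then there exist constants C > 0 and c ≥ 1 such that for all n ≥ 2, (t n : ℝ) ≤ C · Real.sqrt n · (Real.log n)^c. (Any one-round coin-flipping protocol can be secure against at most Õ(√n) strong adaptive corruptions.) -/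
/-- The probability that a uniformly random element of a finite type satisfies `P`. -/
noncomputable def Pr {α : Type*} [Fintype α] (P : α → Prop) : ℝ :=
  letI := Classical.decPred P
  ((Finset.univ.filter P).card : ℝ) / Fintype.card α

/-- `RobustSet proto b t` is the set of message vectors `r` such that every vector within
Hamming distance `t` of `r` (including `r` itself) yields outcome `b`. -/
def RobustSet {ι M : Type*} [Fintype ι] [DecidableEq M]
    (proto : (ι → M) → Bool) (b : Bool) (t : ℕ) : Set (ι → M) :=
  {r | ∀ r', hammingDist r r' ≤ t → proto r' = b}

/-- `proto` is `ε`-secure against `t` strong adaptive corruptions: for every adversary `A`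
changing at most `t` coordinates of the honest messages, every outcome occurs with
probability at least `ε` over uniform honest messages. -/
def StrongSecure {ι M : Type*} [Fintype ι] [DecidableEq ι] [Fintype M] [DecidableEq M]
    (proto : (ι → M) → Bool) (t : ℕ) (ε : ℝ) : Prop :=
  ∀ A : (ι → M) → (ι → M), (∀ r, hammingDist r (A r) ≤ t) →
    ∀ b : Bool, ε ≤ Pr (fun r => proto (A r) = b)

/-!
The adversary that avoids outcome `b` whenever it can shows that the robust set of `b` has
probability at least `ε`, and the robust sets of the two outcomes are at Hamming distance more than
`t`. Two sets `P`, `Q` at Hamming distance at least `t` in a product of `n` finite uniform spaces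
satisfy `Pr P * Pr Q ≤ exp (-t² / n)`, so `ε² ≤ exp (-t² / n)`, that is `t ≤ √(2 n log (1 / ε))`.

For this concentration bound, consider nonnegative `f`, `g` with `f x * g y ≤ exp (l * d(x, y))`,
where `d` is the Hamming distance. Upper bounds on `𝔼 f * 𝔼 g` multiply over products, so only one
coordinate matters; there Kantorovich's inequality gives
`𝔼 f * 𝔼 g ≤ cosh² (l / 2) ≤ exp (l² / 4)`. Take `f` and `g` proportional to the indicators of `P`
and `Q`, and `l = 2 t / n`.
-/

open scoped BigOperators

open Real

/-- Maurey's property (τ) for the uniform distribution on a finite type with cost `w`, in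
multiplicative form: `f` and `g` stand for `exp ∘ φ` and `exp ∘ ψ` with `φ x + ψ y ≤ w x y`, and
may vanish. The constant `c` is the logarithm of the bound, so that costs and constants both add
up over products. -/
def PropertyTau {α : Type*} [Fintype α] (w : α → α → ℝ) (c : ℝ) : Prop :=
  ∀ ⦃f g : α → ℝ⦄, (∀ x, 0 ≤ f x) → (∀ y, 0 ≤ g y) → (∀ x y, f x * g y ≤ exp (w x y)) →
    (𝔼 x, f x) * (𝔼 y, g y) ≤ exp c

namespace PropertyTau

variable {α β : Type*} [Fintype α] [Fintype β] {w : α → α → ℝ} {c : ℝ}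

lemma add_const (h : PropertyTau w c) (k : ℝ) : PropertyTau (fun x y => w x y + k) (c + k) := by
  intro f g hf hg hfg
  have hscaled : (𝔼 x, f x) * (𝔼 y, g y / exp k) ≤ exp c :=
    h hf (fun y => div_nonneg (hg y) (exp_pos k).le) fun x y => by
      rw [← mul_div_assoc, div_le_iff₀ (exp_pos k), ← exp_add]
      exact hfg x y
  rwa [← Finset.expect_div, ← mul_div_assoc, div_le_iff₀ (exp_pos k), ← exp_add] at hscaled

lemma comp_equiv (h : PropertyTau w c) (e : β ≃ α) :
    PropertyTau (fun x y => w (e x) (e y)) c := by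
  intro f g hf hg hfg
  rw [Fintype.expect_equiv e f (f ∘ e.symm) (by simp),
    Fintype.expect_equiv e g (g ∘ e.symm) (by simp)]
  exact h (fun x => hf _) (fun y => hg _) fun x y => by simpa using hfg (e.symm x) (e.symm y)

lemma prod {w' : β → β → ℝ} {c' : ℝ} (h : PropertyTau w c) (h' : PropertyTau w' c') :
    PropertyTau (fun p q : α × β => w p.1 q.1 + w' p.2 q.2) (c + c') := by
  intro f g hf hg hfg
  have hfiber (a b : α) : (𝔼 x, f (a, x)) * (𝔼 y, g (b, y)) ≤ exp (w a b + c') := by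
    rw [add_comm]
    exact h'.add_const (w a b) (fun x => hf _) (fun y => hg _) fun x y => by
      simpa only [add_comm] using hfg (a, x) (b, y)
  rw [← Finset.univ_product_univ, Finset.expect_product, Finset.expect_product]
  exact h.add_const c' (fun a => Finset.expect_nonneg fun x _ => hf _)
    (fun b => Finset.expect_nonneg fun y _ => hg _) hfiber

lemma pi_fin {n : ℕ} {γ : Fin n → Type*} [∀ i, Fintype (γ i)] {w : ∀ i, γ i → γ i → ℝ}
    {c : Fin n → ℝ} (h : ∀ i, PropertyTau (w i) (c i)) :
    PropertyTau (fun x y : ∀ i, γ i => ∑ i, w i (x i) (y i)) (∑ i, c i) := by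
  induction n with
  | zero =>
    intro f g _ _ hfg
    simpa using hfg default default
  | succ n ih =>
    simp only [Fin.sum_univ_succ]
    exact ((h 0).prod (ih fun i => h i.succ)).comp_equiv (Fin.consEquiv γ).symm

lemma pi {ι : Type*} [Fintype ι] [DecidableEq ι] {γ : ι → Type*} [∀ i, Fintype (γ i)]
    {w : ∀ i, γ i → γ i → ℝ} {c : ι → ℝ} (h : ∀ i, PropertyTau (w i) (c i)) :
    PropertyTau (fun x y : ∀ i, γ i => ∑ i, w i (x i) (y i)) (∑ i, c i) := by
  let e := (Fintype.equivFin ι).symm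
  simpa only [Equiv.piCongrLeft_symm_apply, e.sum_comp c,
    fun x y : ∀ i, γ i => e.sum_comp fun i => w i (x i) (y i)] using
    (pi_fin fun j => h (e j)).comp_equiv (Equiv.piCongrLeft γ e).symm

end PropertyTau

section Discrete

variable {α : Type*} [Fintype α]

/-- Kantorovich's inequality: the arithmetic-geometric mean inequality after averaging
`0 ≤ (F - f x) * (G - g x)`. -/
lemma four_mul_mul_expect_mul_expect_le_sq [Nonempty α] {f g : α → ℝ} {F G k : ℝ}
    (hf : ∀ x, 0 ≤ f x) (hg : ∀ x, 0 ≤ g x) (hfF : ∀ x, f x ≤ F) (hgG : ∀ x, g x ≤ G)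
    (hfg : ∀ x, f x * g x ≤ k) :
    4 * (F * G) * ((𝔼 x, f x) * (𝔼 x, g x)) ≤ (F * G + k) ^ 2 := by
  have hF : 0 ≤ F := (hf (Classical.arbitrary α)).trans (hfF _)
  have hG : 0 ≤ G := (hg (Classical.arbitrary α)).trans (hgG _)
  have hsum : G * (𝔼 x, f x) + F * (𝔼 x, g x) ≤ F * G + k := by
    rw [Finset.mul_expect, Finset.mul_expect, ← Finset.expect_add_distrib]
    refine Finset.expect_le Finset.univ_nonempty fun x _ => ?_
    linarith [mul_nonneg (sub_nonneg.2 (hfF x)) (sub_nonneg.2 (hgG x)), hfg x]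
  have hnonneg : 0 ≤ G * (𝔼 x, f x) + F * (𝔼 x, g x) :=
    add_nonneg (mul_nonneg hG (Finset.expect_nonneg fun x _ => hf x))
      (mul_nonneg hF (Finset.expect_nonneg fun x _ => hg x))
  calc 4 * (F * G) * ((𝔼 x, f x) * (𝔼 x, g x))
      = 4 * (G * (𝔼 x, f x)) * (F * (𝔼 x, g x)) := by ring
    _ ≤ (G * (𝔼 x, f x) + F * (𝔼 x, g x)) ^ 2 := four_mul_le_sq_add _ _
    _ ≤ (F * G + k) ^ 2 := by gcongr

lemma exp_add_one_sq_le_four_mul_exp (v : ℝ) :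
    (exp v + 1) ^ 2 ≤ 4 * exp v * exp (v ^ 2 / 4) := by
  have hcosh : (exp v + 1) ^ 2 = 4 * exp v * cosh (v / 2) ^ 2 := by
    have hv : exp v = exp (v / 2) ^ 2 := by rw [← exp_nat_mul]; ring_nf
    rw [cosh_eq, exp_neg, hv]
    field_simp
    norm_num
  have hexp : exp (v ^ 2 / 4) = exp ((v / 2) ^ 2 / 2) ^ 2 := by rw [← exp_nat_mul]; ring_nf
  rw [hcosh, hexp]
  gcongr
  exact cosh_le_exp_half_sq _

lemma propertyTau_discrete [DecidableEq α] {l : ℝ} (hl : 0 ≤ l) :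
    PropertyTau (fun x y : α => if x = y then 0 else l) (l ^ 2 / 4) := by
  intro f g hf hg hfg
  cases isEmpty_or_nonempty α
  · simp [exp_nonneg]
  obtain ⟨a, ha⟩ := Finite.exists_max f
  obtain ⟨b, hb⟩ := Finite.exists_max g
  have hmax : f a * g b ≤ exp l :=
    (hfg a b).trans (exp_le_exp.2 ((ite_le_sup _ _ _).trans_eq (sup_eq_right.2 hl)))
  have hdiag (x : α) : f x * g x ≤ 1 := by simpa using hfg x x
  rcases le_total (f a * g b) 1 with hle | hge
  · calc (𝔼 x, f x) * (𝔼 y, g y)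
        ≤ f a * g b := mul_le_mul (Finset.expect_le Finset.univ_nonempty fun x _ => ha x)
          (Finset.expect_le Finset.univ_nonempty fun y _ => hb y)
          (Finset.expect_nonneg fun y _ => hg y) (hf a)
      _ ≤ exp (l ^ 2 / 4) := hle.trans (one_le_exp (by positivity))
  · obtain ⟨v, hv⟩ : ∃ v, exp v = f a * g b := ⟨_, exp_log (by linarith)⟩
    rw [← hv] at hmax hge
    have hv0 : 0 ≤ v := one_le_exp_iff.1 hge
    have hvl : v ≤ l := exp_le_exp.1 hmax
    have hkant := four_mul_mul_expect_mul_expect_le_sq hf hg ha hb hdiag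
    rw [← hv] at hkant
    have hvbound : (𝔼 x, f x) * (𝔼 y, g y) ≤ exp (v ^ 2 / 4) :=
      le_of_mul_le_mul_left (hkant.trans (exp_add_one_sq_le_four_mul_exp v)) (by positivity)
    exact hvbound.trans (by gcongr)

end Discrete

lemma propertyTau_hammingDist {ι : Type*} [Fintype ι] [DecidableEq ι] {α : ι → Type*}
    [∀ i, Fintype (α i)] [∀ i, DecidableEq (α i)] {l : ℝ} (hl : 0 ≤ l) :
    PropertyTau (fun x y : ∀ i, α i => l * hammingDist x y) (Fintype.card ι * (l ^ 2 / 4)) := by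
  have hcost (x y : ∀ i, α i) : ∑ i, (if x i = y i then 0 else l) = l * hammingDist x y := by
    simp [hammingDist, Finset.sum_ite, mul_comm]
  simpa only [hcost, Finset.sum_const, Finset.card_univ, nsmul_eq_mul] using
    PropertyTau.pi fun i => propertyTau_discrete (α := α i) hl

section Pr

variable {α : Type*} [Fintype α] {P Q : α → Prop}

open scoped Classical in
lemma Pr_eq_expect (P : α → Prop) : Pr P = 𝔼 x, if P x then (1 : ℝ) else 0 := by
  rw [Fintype.expect_eq_sum_div_card, Finset.sum_boole, Pr]

lemma Pr_mono (h : ∀ x, P x → Q x) : Pr P ≤ Pr Q := by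
  classical
  rw [Pr_eq_expect, Pr_eq_expect]
  refine Finset.expect_le_expect fun x _ => ?_
  have := h x
  split_ifs <;> simp_all

lemma PropertyTau.Pr_mul_Pr_le {w : α → α → ℝ} {c s : ℝ} (h : PropertyTau w c)
    (hPQ : ∀ x y, P x → Q y → s ≤ w x y) : Pr P * Pr Q ≤ exp (c - s) := by
  classical
  have hprod : (𝔼 x, if P x then (1 : ℝ) else 0) * (𝔼 y, (if Q y then (1 : ℝ) else 0) * exp s)
      ≤ exp c := by
    refine h (fun x => by positivity) (fun y => by positivity) fun x y => ?_
    by_cases hxy : P x ∧ Q y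
    · simpa [hxy.1, hxy.2] using hPQ x y hxy.1 hxy.2
    · rcases not_and_or.1 hxy with hx | hy
      · simp [hx, exp_nonneg]
      · simp [hy, exp_nonneg]
  rwa [← Finset.expect_mul, ← Pr_eq_expect, ← Pr_eq_expect, ← mul_assoc,
    ← le_div_iff₀ (exp_pos s), ← exp_sub] at hprod

end Pr

theorem Pr_mul_Pr_le_exp_neg_sq_div_card {ι : Type*} [Fintype ι] [DecidableEq ι] {α : ι → Type*}
    [∀ i, Fintype (α i)] [∀ i, DecidableEq (α i)] {P Q : (∀ i, α i) → Prop} {s : ℝ} (hs : 0 ≤ s)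
    (hPQ : ∀ x y, P x → Q y → s ≤ hammingDist x y) :
    Pr P * Pr Q ≤ exp (-(s ^ 2 / Fintype.card ι)) := by
  -- With `n = Fintype.card ι`, the slope `l = 2 * s / n` minimizes `n * (l ^ 2 / 4) - l * s`.
  have hl : 0 ≤ 2 * s / Fintype.card ι := by positivity
  refine ((propertyTau_hammingDist hl).Pr_mul_Pr_le fun x y hx hy =>
    mul_le_mul_of_nonneg_left (hPQ x y hx hy) hl).trans_eq ?_
  rcases eq_or_ne (Fintype.card ι : ℝ) 0 with hn | hn
  · simp [hn]
  · congr 1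
    field_simp
    ring

section RobustSet

variable {ι M : Type*} [Fintype ι] [DecidableEq M] {proto : (ι → M) → Bool} {t : ℕ}

lemma lt_hammingDist_of_mem_RobustSet {b b' : Bool} (hb : b ≠ b') {x y : ι → M}
    (hx : x ∈ RobustSet proto b t) (hy : y ∈ RobustSet proto b' t) : t < hammingDist x y := by
  by_contra! hle
  have hyb : proto y = b := hx y hle
  have hyb' : proto y = b' := hy y (by simp)
  exact hb (hyb.symm.trans hyb')

variable [DecidableEq ι] [Fintype M] {ε : ℝ}

lemma StrongSecure.le_Pr_mem_RobustSet (h : StrongSecure proto t ε) (b : Bool) :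
    ε ≤ Pr (· ∈ RobustSet proto b t) := by
  have hadversary (r : ι → M) :
      ∃ r', hammingDist r r' ≤ t ∧ (proto r' = b → r ∈ RobustSet proto b t) := by
    by_cases hr : r ∈ RobustSet proto b t
    · exact ⟨r, by simp, fun _ => hr⟩
    · obtain ⟨r', hdist, hout⟩ : ∃ r', hammingDist r r' ≤ t ∧ proto r' ≠ b := by
        simpa [RobustSet] using hr
      exact ⟨r', hdist, fun hb => absurd hb hout⟩
  choose A hdist hrobust using hadversary
  exact (h A hdist b).trans (Pr_mono hrobust)

lemma StrongSecure.sq_le_exp (h : StrongSecure proto t ε) (hε : 0 < ε) :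
    ε ^ 2 ≤ exp (-(t ^ 2 / Fintype.card ι)) := by
  have htrue := h.le_Pr_mem_RobustSet true
  have hfalse := h.le_Pr_mem_RobustSet false
  calc ε ^ 2 = ε * ε := sq ε
    _ ≤ Pr (· ∈ RobustSet proto true t) * Pr (· ∈ RobustSet proto false t) :=
      mul_le_mul htrue hfalse hε.le (hε.le.trans htrue)
    _ ≤ exp (-(t ^ 2 / Fintype.card ι)) :=
      Pr_mul_Pr_le_exp_neg_sq_div_card t.cast_nonneg fun x y hx hy =>
        Nat.cast_le.2 (lt_hammingDist_of_mem_RobustSet (by decide) hx hy).le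

theorem stmt9_general [Nonempty ι] (hε : 0 < ε) (h : StrongSecure proto t ε) :
    (t : ℝ) ≤ √(2 * log ε⁻¹) * √(Fintype.card ι) := by
  have hcard : (0 : ℝ) < Fintype.card ι := by exact_mod_cast Fintype.card_pos
  have hlog : 2 * log ε ≤ -(t ^ 2 / Fintype.card ι) := by
    simpa using (log_le_iff_le_exp (by positivity)).2 (h.sq_le_exp hε)
  have hsq : (t : ℝ) ^ 2 ≤ 2 * log ε⁻¹ * Fintype.card ι := by
    rw [← div_le_iff₀ hcard, log_inv]
    linarith
  rw [← sqrt_mul' _ hcard.le]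
  exact le_sqrt_of_sq_le hsq

end RobustSet

lemma mul_sqrt_le_mul_sqrt_mul_log {a x : ℝ} (ha : 0 ≤ a) (hx : 2 ≤ x) :
    a * √x ≤ 2 * a * √x * log x := by
  have hlog : 1 ≤ 2 * log x := by linarith [log_two_gt_d9, log_le_log two_pos hx]
  calc a * √x ≤ a * √x * (2 * log x) := le_mul_of_one_le_right (by positivity) hlog
    _ = 2 * a * √x * log x := by ring

/-- (Main theorem, asymptotic form.) Any family of one-round protocols
that is `ε`-secure against `t n` strong adaptive corruptions satisfies
`t n ≤ C·√n·(log n)^c` for some constants `C > 0`, `c ≥ 1`. -/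
theorem stmt9 {ε : ℝ} (hε0 : 0 < ε) (hε1 : ε < 1)
    (M : ℕ → Type) [∀ n, Fintype (M n)] [∀ n, Nonempty (M n)] [∀ n, DecidableEq (M n)]
    (proto : ∀ n, (Fin n → M n) → Bool) (t : ℕ → ℕ)
    (h : ∀ n, 1 ≤ n → StrongSecure (proto n) (t n) ε) :
    ∃ C c : ℝ, 0 < C ∧ 1 ≤ c ∧ ∀ n : ℕ, 2 ≤ n →
      (t n : ℝ) ≤ C * Real.sqrt n * Real.log n ^ c := by
  have hC : 0 < log ε⁻¹ := log_pos ((one_lt_inv₀ hε0).2 hε1)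
  refine ⟨2 * √(2 * log ε⁻¹), 1, by positivity, le_rfl, fun n hn => ?_⟩
  have : NeZero n := ⟨by lia⟩
  have ht : (t n : ℝ) ≤ √(2 * log ε⁻¹) * √n := by simpa using stmt9_general hε0 (h n (by lia))
  simpa only [rpow_one] using
    ht.trans (mul_sqrt_le_mul_sqrt_mul_log (sqrt_nonneg _) (by exact_mod_cast hn))
end

section
/- Fix n ≥ 1, ℓ' ≥ 1, and a nonempty finite message space M. Consider the following two random elements of Fin n → (Fin n → M): (i) sample Mat uniformly from Fin ℓ' → Fin n → M and a_1, …, a_n independently and uniformly from Fin n → Fin ℓ', and output the tuple whose i-th entry is the vector (fun j => Mat (a_i j) j); (ii) output a uniformly random element of Fin n → (Fin n → M). Then for every set S of elements of Fin n → (Fin n → M), the absolute difference between the probabilities that (i) lies in S and that (ii) lies in S is at most n³/ℓ'. (The n message vectors read off a random matrix at independent random row indices are statistically close to n independent uniform message vectors.) -/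
section Injective

open Function

variable {ι κ ρ : Type*}

lemma not_injective_iff_exists_isDiag_map {f : ι → κ} :
    ¬ Injective f ↔ ∃ s : {s : Sym2 ι // ¬ s.IsDiag}, (s.1.map f).IsDiag := by
  simp [Injective, Sym2.exists, and_comm]

lemma injective_position_of_injective_columns {a : ι → κ → ρ}
    (ha : ∀ j, Injective fun i => a i j) :
    Injective fun x : ι × κ => (a x.1 x.2, x.2) := by
  rintro ⟨i, j⟩ ⟨i', j'⟩ h
  obtain ⟨hrow, rfl⟩ := Prod.mk.inj h
  exact congrArg (·, j) (ha j hrow)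

end Injective

section Probability

open Finset
open scoped BigOperators

variable {α β τ : Type*} [Fintype α] [Fintype β] [Fintype τ]

open Classical in
lemma pr_eq_expect (P : α → Prop) : Pr P = 𝔼 a, if P a then (1 : ℝ) else 0 := by
  rw [Fintype.expect_eq_sum_div_card, sum_boole]
  rfl

lemma pr_mem_Icc (P : α → Prop) : Pr P ∈ Set.Icc 0 1 := by
  classical
  refine ⟨by unfold Pr; positivity, div_le_one_of_le₀ ?_ (Nat.cast_nonneg _)⟩
  exact_mod_cast card_le_univ _

lemma pr_eq_right (b : α) : Pr (fun a => a = b) = 1 / Fintype.card α := by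
  classical
  simp [pr_eq_expect]

lemma pr_equiv (e : α ≃ β) (P : β → Prop) : Pr (fun a => P (e a)) = Pr P := by
  classical
  simp only [pr_eq_expect]
  exact Fintype.expect_equiv e _ _ fun _ => rfl

lemma pr_prod (P : α × β → Prop) : Pr P = 𝔼 b, Pr (fun a => P (a, b)) := by
  classical
  simp only [pr_eq_expect]
  rw [← univ_product_univ, expect_product, expect_comm]

lemma pr_fst [Nonempty β] (P : α → Prop) : Pr (fun p : α × β => P p.1) = Pr P := by
  simp only [pr_prod, Fintype.expect_const]

lemma pr_exists_le_sum (P : τ → α → Prop) : Pr (fun a => ∃ t, P t a) ≤ ∑ t, Pr (P t) := by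
  classical
  simp only [pr_eq_expect]
  rw [← expect_sum_comm]
  refine expect_le_expect fun a _ => ?_
  split_ifs with h
  · obtain ⟨t, ht⟩ := h
    simpa only [if_pos ht] using
      single_le_sum (f := fun t => if P t a then (1 : ℝ) else 0) (fun _ _ => by positivity)
        (mem_univ t)
  · positivity

lemma pr_exists_le_card_mul {P : τ → α → Prop} {c : ℝ} (h : ∀ t, Pr (P t) ≤ c) :
    Pr (fun a => ∃ t, P t a) ≤ Fintype.card τ * c := by
  simpa using (pr_exists_le_sum P).trans (sum_le_card_nsmul univ _ c fun t _ => h t)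

lemma abs_pr_sub_le_pr_of_forall_not [Nonempty β] {P : α × β → Prop} {B : β → Prop} {c : ℝ}
    (hc : c ∈ Set.Icc 0 1) (h : ∀ b, ¬ B b → Pr (fun a => P (a, b)) = c) :
    |Pr P - c| ≤ Pr B := by
  classical
  calc |Pr P - c| = |𝔼 b, (Pr (fun a => P (a, b)) - c)| := by
        rw [expect_sub_distrib, Fintype.expect_const, pr_prod]
    _ ≤ 𝔼 b, |Pr (fun a => P (a, b)) - c| := abs_expect_le _ _
    _ ≤ 𝔼 b, if B b then (1 : ℝ) else 0 := expect_le_expect fun b _ => by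
        split_ifs with hb
        · obtain ⟨h₀, h₁⟩ := pr_mem_Icc fun a => P (a, b)
          exact abs_sub_le_of_nonneg_of_le h₀ h₁ hc.1 hc.2
        · rw [h b hb, sub_self, abs_zero]
    _ = Pr B := (pr_eq_expect B).symm

end Probability

section RandomFunction

open Function

variable {ι κ ρ γ M : Type*} [Fintype ι] [DecidableEq ι] [Fintype κ] [DecidableEq κ]
  [Fintype ρ] [Fintype γ] [DecidableEq γ] [Fintype M]

lemma pr_comp_injective [Nonempty M] {e : ι → κ} (he : Injective e) (P : (ι → M) → Prop) :
    Pr (fun f : κ → M => P (f ∘ e)) = Pr P := by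
  classical
  -- `κ → M` splits into the functions on the range of `e` and those on its complement.
  have split := pr_equiv (Equiv.piEquivPiSubtypeProd (· ∈ Set.range e) fun _ => M)
    fun p => P fun i => p.1 ⟨e i, i, rfl⟩
  have drop_compl := pr_fst (β := {k // k ∉ Set.range e} → M)
    fun q : {k // k ∈ Set.range e} → M => P fun i => q ⟨e i, i, rfl⟩
  have reindex := pr_equiv ((Equiv.ofInjective e he).symm.arrowCongr (Equiv.refl M)) P
  exact split.trans (drop_compl.trans reindex)

lemma pr_uncurry_comp_injective [Nonempty M] {e : γ → ι × κ} (he : Injective e)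
    (P : (γ → M) → Prop) : Pr (fun A : ι → κ → M => P (uncurry A ∘ e)) = Pr P :=
  (pr_equiv (Equiv.curry ι κ M).symm fun f => P (f ∘ e)).trans (pr_comp_injective he P)

lemma pr_apply_eq_apply [Nonempty M] {x y : ι} (hxy : x ≠ y) :
    Pr (fun f : ι → M => f x = f y) = 1 / Fintype.card M := by
  calc Pr (fun f : ι → M => f x = f y)
      = Pr (fun p : M × ({i // i ≠ x} → M) => p.1 = p.2 ⟨y, hxy.symm⟩) :=
        pr_equiv (Equiv.funSplitAt x M) fun p => p.1 = p.2 ⟨y, hxy.symm⟩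
    _ = 1 / Fintype.card M := by
        simp only [pr_prod, pr_eq_right, Fintype.expect_const]

lemma pr_isDiag_map [Nonempty M] {s : Sym2 ι} (hs : ¬ s.IsDiag) :
    Pr (fun f : ι → M => (s.map f).IsDiag) = 1 / Fintype.card M := by
  induction s with
  | _ x y => exact pr_apply_eq_apply hs

lemma pr_not_injective_le [Nonempty M] :
    Pr (fun f : ι → M => ¬ Injective f) ≤ (Fintype.card ι).choose 2 / Fintype.card M := by
  simp only [not_injective_iff_exists_isDiag_map]
  refine (pr_exists_le_card_mul fun s => (pr_isDiag_map s.2).le).trans_eq ?_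
  rw [Sym2.card_subtype_not_diag, mul_one_div]

lemma pr_exists_not_injective_column_le [Nonempty ρ] :
    Pr (fun a : ι → κ → ρ => ∃ j, ¬ Injective fun i => a i j) ≤
      Fintype.card κ * ((Fintype.card ι).choose 2 / Fintype.card ρ) :=
  pr_exists_le_card_mul fun j =>
    (pr_uncurry_comp_injective (Prod.mk_left_injective j) fun f : ι → ρ => ¬ Injective f).trans_le
      pr_not_injective_le

variable [DecidableEq ρ]

lemma pr_read_of_injective_columns [Nonempty M] {a : ι → κ → ρ}
    (ha : ∀ j, Injective fun i => a i j) (P : (ι → κ → M) → Prop) :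
    Pr (fun A : ρ → κ → M => P fun i j => A (a i j) j) = Pr P :=
  (pr_uncurry_comp_injective (injective_position_of_injective_columns ha) (P ∘ curry)).trans
    (pr_equiv (Equiv.curry ι κ M) P)

theorem stmt14_general [Nonempty ρ] [Nonempty M] (S : Set (ι → κ → M)) :
    |Pr (fun p : (ρ → κ → M) × (ι → κ → ρ) => (fun i j => p.1 (p.2 i j) j) ∈ S)
      - Pr (fun u : ι → κ → M => u ∈ S)| ≤
      Fintype.card κ * ((Fintype.card ι).choose 2 / Fintype.card ρ) := by
  refine (abs_pr_sub_le_pr_of_forall_not (pr_mem_Icc _) fun a ha => ?_).trans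
    pr_exists_not_injective_column_le
  exact pr_read_of_injective_columns (not_exists_not.mp ha) (· ∈ S)

end RandomFunction

lemma mul_choose_two_div_le_pow_three_div (n m : ℕ) :
    (n : ℝ) * (n.choose 2 / m) ≤ (n : ℝ) ^ 3 / m := by
  rw [← mul_div_assoc, pow_succ' (n : ℝ) 2]
  gcongr
  exact_mod_cast Nat.choose_le_pow n 2

/-- The `n` message vectors read off a uniformly random `ℓ' × n` matrix at
`n` independent uniformly random row-index vectors are within statistical distance `n³/ℓ'`
of `n` independent uniform message vectors. -/
theorem stmt14 {n ℓ' : ℕ} (hn : 1 ≤ n) (hl : 1 ≤ ℓ') {M : Type*} [Fintype M] [Nonempty M]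
    (S : Set (Fin n → Fin n → M)) :
    |Pr (fun p : (Fin ℓ' → Fin n → M) × (Fin n → Fin n → Fin ℓ') =>
          (fun i j => p.1 (p.2 i j) j) ∈ S)
      - Pr (fun u : Fin n → Fin n → M => u ∈ S)| ≤ (n : ℝ) ^ 3 / ℓ' := by
  have : Nonempty (Fin ℓ') := Fin.pos_iff_nonempty.mp hl
  exact (stmt14_general S).trans <| by
    simpa only [Fintype.card_fin] using mul_choose_two_div_le_pow_three_div n ℓ'
end
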